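/- Let k, l ∈ ℝ satisfy k > −1, l > −1/2, k + l + 1/2 > 0, and k < l + 3/2. Let E₀ > 0 and let φ : (0,∞) → [0,∞) be measurable, locally essentially bounded on (0, E₀), with φ(E) = 0 for E ≥ E₀, and φ(E) = c(E₀ − E)₊^k + O((E₀ − E)₊^{k+δ}) as E → E₀− for some constants c > 0 and δ > 0. Let (λ, μ) ∈ C¹([0,∞))² with λ(0) = 0 satisfy the field equations e^{−2λ(r)}(2rλ'(r) − 1) + 1 = 8πr²ρ(r) and e^{−2λ(r)}(2rμ'(r) + 1) − 1 = 8πr²p(r) for r > 0, where ρ(r) = 2π c_{l,−1/2} r^{2l} (e^{−(2l+4)μ(r)} h_{l+3/2}(e^{μ(r)}) + e^{−(2l+2)μ(r)} h_{l+1/2}(e^{μ(r)})), p(r) = 2π c_{l,1/2} r^{2l} e^{−(2l+4)μ(r)} h_{l+3/2}(e^{μ(r)}), h_m(u) = ∫_u^{E₀} φ(E)(E² − u²)₊^m dE, and c_{a,b} = ∫₀¹ s^a(1−s)^b ds. Then there exists R < ∞ such that ρ(r) = 0 for all r ≥ R, and the ADM mass M = 4π∫₀^∞ r²ρ(r) dr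 is finite. -/

import Mathlib

open MeasureTheory Real Set

/-- The constant `c_{a,b} = ∫₀¹ s^a (1-s)^b ds`. -/
noncomputable def cab (a b : ℝ) : ℝ := ∫ s in (0:ℝ)..1, s ^ a * (1 - s) ^ b

/-- The function `h_m(u) = ∫_u^{E₀} φ(E) (E² - u²)₊^m dE`. -/
noncomputable def hfun (φ : ℝ → ℝ) (E₀ m u : ℝ) : ℝ :=
  ∫ E in u..E₀, φ E * (max (E ^ 2 - u ^ 2) 0) ^ m

/-- The energy density of the reduced static spherically symmetric
Vlasov-Einstein system with ansatz `f = φ(E) L^l`. -/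
noncomputable def rhoRedVE (φ : ℝ → ℝ) (E₀ l : ℝ) (mu : ℝ → ℝ) (r : ℝ) : ℝ :=
  2 * Real.pi * cab l (-(1/2)) * r ^ (2 * l) *
    (Real.exp (-(2 * l + 4) * mu r) * hfun φ E₀ (l + 3/2) (Real.exp (mu r)) +
      Real.exp (-(2 * l + 2) * mu r) * hfun φ E₀ (l + 1/2) (Real.exp (mu r)))

/-- The radial pressure of the reduced static spherically symmetric
Vlasov-Einstein system with ansatz `f = φ(E) L^l`. -/
noncomputable def pRedVE (φ : ℝ → ℝ) (E₀ l : ℝ) (mu : ℝ → ℝ) (r : ℝ) : ℝ :=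
  2 * Real.pi * cab l (1/2) * r ^ (2 * l) *
    Real.exp (-(2 * l + 4) * mu r) * hfun φ E₀ (l + 3/2) (Real.exp (mu r))

lemma antitoneOn_Ici_of_hasDerivAt {f f' : ℝ → ℝ} {a : ℝ}
    (hf : ∀ r, a ≤ r → HasDerivAt f (f' r) r) (hf' : ∀ r, a ≤ r → f' r ≤ 0) :
    AntitoneOn f (Ici a) := by
  refine antitoneOn_of_deriv_nonpos (convex_Ici a)
    (fun r hr => (hf r hr).continuousAt.continuousWithinAt)
    (fun r hr => (hf r (interior_subset hr)).differentiableAt.differentiableWithinAt) ?_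
  intro r hr
  rw [(hf r (interior_subset hr)).deriv]
  exact hf' r (interior_subset hr)

/-- If the potential `y` stays positive and decreases at least at the rate `m / r²` dictated by a
nondecreasing mass `m`, then it dominates the Newtonian potential `m / r`. -/
lemma mass_div_le_potential {m y y' : ℝ → ℝ}
    (hmono : MonotoneOn m (Ici 1))
    (hy : ∀ r, 1 ≤ r → HasDerivAt y (y' r) r)
    (ypos : ∀ r, 1 ≤ r → 0 < y r)
    (hy' : ∀ r, 1 ≤ r → y' r ≤ -(m r / r ^ 2)) {r : ℝ} (hr : 1 ≤ r) :
    m r / r ≤ y r := by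
  have hanti : AntitoneOn (fun s => y s - m r * s⁻¹) (Ici r) := by
    refine antitoneOn_Ici_of_hasDerivAt (f' := fun s => y' s - m r * (-(s ^ 2)⁻¹)) ?_ ?_
    · intro s hs
      have hs0 : s ≠ 0 := by linarith
      exact (hy s (hr.trans hs)).sub ((hasDerivAt_inv hs0).const_mul _)
    · intro s hs
      have h1 := hy' s (hr.trans hs)
      have h2 : m r ≤ m s := hmono hr (hr.trans hs : (1 : ℝ) ≤ s) hs
      have h3 : m r * (s ^ 2)⁻¹ ≤ m s * (s ^ 2)⁻¹ :=
        mul_le_mul_of_nonneg_right h2 (by positivity)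
      rw [div_eq_mul_inv] at h1
      linarith
  have hlim : Filter.Tendsto (fun s : ℝ => -(m r * s⁻¹)) Filter.atTop (nhds (-(m r * 0))) :=
    (tendsto_inv_atTop_zero.const_mul _).neg
  have hge : -(m r * 0) ≤ y r - m r * r⁻¹ := by
    refine le_of_tendsto hlim ?_
    filter_upwards [Filter.eventually_ge_atTop r] with s hs
    have h1 : y s - m r * s⁻¹ ≤ y r - m r * r⁻¹ :=
      hanti (mem_Ici.2 le_rfl) (mem_Ici.2 hs) hs
    have h2 := ypos s (hr.trans hs)
    linarith
  rw [div_eq_mul_inv]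
  linarith

/-- The differential inequality `K r^a m^n ≤ m'` with `n > 1` and `a > -1` has no global positive
solution. -/
lemma false_of_superlinear_growth {m m' : ℝ → ℝ} {K n a : ℝ}
    (hK : 0 < K) (hn : 1 < n) (ha : -1 < a)
    (hm : ∀ r, 2 ≤ r → HasDerivAt m (m' r) r)
    (mpos : ∀ r, 2 ≤ r → 0 < m r)
    (hm' : ∀ r, 2 ≤ r → K * r ^ a * m r ^ n ≤ m' r) : False := by
  set q := (n - 1) * K / (a + 1) with hq
  have ha1 : 0 < a + 1 := by linarith
  have hqpos : 0 < q := div_pos (mul_pos (by linarith) hK) ha1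
  have hanti : AntitoneOn (fun r => m r ^ (1 - n) + q * r ^ (a + 1)) (Ici 2) := by
    refine antitoneOn_Ici_of_hasDerivAt
      (f' := fun r => m' r * (1 - n) * m r ^ (1 - n - 1) + q * ((a + 1) * r ^ (a + 1 - 1))) ?_ ?_
    · intro r hr
      exact ((hm r hr).rpow_const (Or.inl (mpos r hr).ne')).add
        ((Real.hasDerivAt_rpow_const (Or.inl (by linarith))).const_mul _)
    · intro r hr
      have h0 := mpos r hr
      have h1 := hm' r hr
      have hneg : m r ^ (1 - n - 1) = (m r ^ n)⁻¹ := by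
        rw [← Real.rpow_neg h0.le]; congr 1; ring
      have hP : 0 < m r ^ n := Real.rpow_pos_of_pos h0 n
      have h2 : K * r ^ a ≤ m' r * (m r ^ n)⁻¹ := by
        rw [← div_eq_mul_inv, le_div_iff₀ hP]; exact h1
      have h3 : q * ((a + 1) * r ^ (a + 1 - 1)) = (n - 1) * (K * r ^ a) := by
        rw [hq, add_sub_cancel_right]; field_simp
      rw [h3, hneg]
      nlinarith
  have hlim : Filter.Tendsto (fun r : ℝ => q * r ^ (a + 1)) Filter.atTop Filter.atTop :=
    (tendsto_rpow_atTop ha1).const_mul_atTop hqpos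
  obtain ⟨r, hr, hr2⟩ := ((hlim.eventually_gt_atTop (m 2 ^ (1 - n) + q * 2 ^ (a + 1))).and
    (Filter.eventually_ge_atTop 2)).exists
  have h1 : m r ^ (1 - n) + q * r ^ (a + 1) ≤ m 2 ^ (1 - n) + q * 2 ^ (a + 1) :=
    hanti (mem_Ici.2 le_rfl) (mem_Ici.2 hr2) hr2
  have h2 := Real.rpow_pos_of_pos (mpos r hr2) (1 - n)
  linarith

/-- A mass function generated by a density bounded below by `K r^b y^n / r²`, where the potential
`y` satisfies `y' ≤ -m / r²`, is incompatible with `y` being positive for all large radii. -/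
lemma false_of_potential_pos {m y m' y' : ℝ → ℝ} {K n b : ℝ}
    (hK : 0 < K) (hn : 1 < n) (hb : n < b + 1)
    (hm : ∀ r, 1 ≤ r → HasDerivAt m (m' r) r)
    (hy : ∀ r, 1 ≤ r → HasDerivAt y (y' r) r)
    (hm0 : ∀ r, 1 ≤ r → 0 ≤ m r)
    (ypos : ∀ r, 1 ≤ r → 0 < y r)
    (hm' : ∀ r, 1 ≤ r → K * r ^ b * y r ^ n ≤ m' r)
    (hy' : ∀ r, 1 ≤ r → y' r ≤ -(m r / r ^ 2)) : False := by
  have hm'pos : ∀ r, 1 ≤ r → 0 < m' r := by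
    intro r hr
    have h1 := Real.rpow_pos_of_pos (ypos r hr) n
    have h2 := Real.rpow_pos_of_pos (show 0 < r by linarith) b
    exact lt_of_lt_of_le (by positivity) (hm' r hr)
  have hmono : StrictMonoOn m (Ici 1) := by
    refine strictMonoOn_of_deriv_pos (convex_Ici 1)
      (fun r hr => (hm r hr).continuousAt.continuousWithinAt) ?_
    intro r hr
    rw [(hm r (interior_subset hr)).deriv]
    exact hm'pos r (interior_subset hr)
  refine false_of_superlinear_growth (m := m) (m' := m') (a := b - n) hK hn (by linarith)
    (fun r hr => hm r (by linarith)) ?_ ?_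
  · intro r hr
    have hr1 : 1 < r := by linarith
    exact (hm0 1 le_rfl).trans_lt (hmono (mem_Ici.2 le_rfl) (mem_Ici.2 hr1.le) hr1)
  · intro r hr
    have hr1 : 1 ≤ r := by linarith
    have hr0 : 0 < r := by linarith
    have h1 := mass_div_le_potential hmono.monotoneOn hy ypos hy' hr1
    have h2 : (m r / r) ^ n ≤ y r ^ n :=
      Real.rpow_le_rpow (div_nonneg (hm0 r hr1) hr0.le) h1 (by linarith)
    refine le_trans (le_of_eq ?_) ((mul_le_mul_of_nonneg_left h2 (by positivity)).trans (hm' r hr1))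
    rw [Real.div_rpow (hm0 r hr1) hr0.le, Real.rpow_sub hr0]
    ring

lemma cab_pos {a b : ℝ} (ha : -1 < a) (hb : -1 < b) : 0 < cab a b := by
  refine intervalIntegral.intervalIntegral_pos_of_pos_on ?_ ?_ one_pos
  · have h := (Complex.betaIntegral_convergent (u := ((a + 1 : ℝ) : ℂ)) (v := ((b + 1 : ℝ) : ℂ))
      (by simp only [Complex.ofReal_re]; linarith) (by simp only [Complex.ofReal_re]; linarith)).norm
    rw [intervalIntegrable_iff_integrableOn_Ioo_of_le zero_le_one] at h ⊢
    refine h.congr_fun (fun s hs => ?_) measurableSet_Ioo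
    have h1 : 0 < 1 - s := by linarith [hs.2]
    have e : (1 : ℂ) - s = ((1 - s : ℝ) : ℂ) := by simp
    simp only [e, norm_mul]
    rw [Complex.norm_cpow_eq_rpow_re_of_pos hs.1, Complex.norm_cpow_eq_rpow_re_of_pos h1]
    simp
  · intro s hs
    exact mul_pos (Real.rpow_pos_of_pos hs.1 _) (Real.rpow_pos_of_pos (by linarith [hs.2]) _)

lemma hfun_eq_zero {φ : ℝ → ℝ} {E₀ u : ℝ} (m : ℝ) (hvanish : ∀ E, E₀ ≤ E → φ E = 0)
    (hu : E₀ ≤ u) : hfun φ E₀ m u = 0 := by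
  refine (intervalIntegral.integral_congr (g := fun _ => (0 : ℝ)) fun E hE => ?_).trans (by simp)
  rw [uIcc_of_ge hu] at hE
  simp [hvanish E hE.1]

lemma hfun_nonneg {φ : ℝ → ℝ} {E₀ u : ℝ} (m : ℝ) (hnonneg : ∀ E, 0 < E → 0 ≤ φ E)
    (hvanish : ∀ E, E₀ ≤ E → φ E = 0) (hu : 0 < u) : 0 ≤ hfun φ E₀ m u := by
  rcases le_total E₀ u with h | h
  · exact (hfun_eq_zero m hvanish h).ge
  · exact intervalIntegral.integral_nonneg h fun E hE =>
      mul_nonneg (hnonneg E (hu.trans_le hE.1)) (Real.rpow_nonneg (le_max_right _ _) _)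

lemma integrableOn_max_sub_rpow {E₀ a s : ℝ} (ha : a ≤ E₀) (hs : -1 < s) :
    IntegrableOn (fun E => (max (E₀ - E) 0) ^ s) (Ioc a E₀) := by
  have h := (intervalIntegral.intervalIntegrable_rpow' (a := E₀ - a) (b := 0) hs).comp_sub_left E₀
  rw [sub_sub_cancel, sub_zero, intervalIntegrable_iff_integrableOn_Ioc_of_le ha] at h
  refine h.congr_fun (fun E hE => ?_) measurableSet_Ioc
  simp only [max_eq_left (sub_nonneg.2 hE.2)]

lemma integrableOn_profile {k E₀ c δ C ε u : ℝ} {φ : ℝ → ℝ} (hk : -1 < k) (hδ : 0 < δ)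
    (hmeas : Measurable φ) (hnonneg : ∀ E, 0 < E → 0 ≤ φ E)
    (hloc : ∀ K : Set ℝ, IsCompact K → K ⊆ Ioo 0 E₀ → ∃ C : ℝ, ∀ᵐ E : ℝ, E ∈ K → φ E ≤ C)
    (hε : 0 < ε)
    (hasymp : ∀ E, E₀ - ε < E →
      |φ E - c * (max (E₀ - E) 0) ^ k| ≤ C * (max (E₀ - E) 0) ^ (k + δ))
    (hu : 0 < u) : IntegrableOn φ (Ioc u E₀) := by
  have hcompact : IntegrableOn φ (Icc u (E₀ - ε / 2)) := by
    obtain ⟨B, hB⟩ := hloc (Icc u (E₀ - ε / 2)) isCompact_Icc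
      (fun E hE => ⟨hu.trans_le hE.1, by linarith [hE.2]⟩)
    refine Integrable.mono' (g := fun _ => B) (integrableOn_const (by simp))
      hmeas.aestronglyMeasurable ?_
    rw [ae_restrict_iff' measurableSet_Icc]
    filter_upwards [hB] with E hE hEK
    rw [Real.norm_of_nonneg (hnonneg E (hu.trans_le hEK.1))]
    exact hE hEK
  have hend : IntegrableOn φ (Ioc (E₀ - ε / 2) E₀) := by
    have h1 := (integrableOn_max_sub_rpow (E₀ := E₀) (a := E₀ - ε / 2) (s := k)
      (by linarith) hk).const_mul |c|
    have h2 := (integrableOn_max_sub_rpow (E₀ := E₀) (a := E₀ - ε / 2) (s := k + δ)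
      (by linarith) (by linarith)).const_mul C
    refine Integrable.mono' (h1.add h2) hmeas.aestronglyMeasurable ?_
    refine ae_restrict_of_forall_mem measurableSet_Ioc fun E hE => ?_
    have h3 := hasymp E (by linarith [hE.1])
    have h4 : |c * (max (E₀ - E) 0) ^ k| = |c| * (max (E₀ - E) 0) ^ k := by
      rw [abs_mul, abs_of_nonneg (Real.rpow_nonneg (le_max_right _ _) _)]
    have h5 := abs_sub_abs_le_abs_sub (φ E) (c * (max (E₀ - E) 0) ^ k)
    simp only [Pi.add_apply, Real.norm_eq_abs]
    linarith
  refine (hcompact.union hend).mono_set fun E hE => ?_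
  rcases le_or_gt E (E₀ - ε / 2) with h | h
  · exact Or.inl ⟨hE.1.le, h⟩
  · exact Or.inr ⟨h, hE.2⟩

/-- Near the cut-off energy the profile is bounded below by half of its leading term. -/
lemma exists_profile_lower_bound {k E₀ c δ : ℝ} {φ : ℝ → ℝ} (hE₀ : 0 < E₀) (hc : 0 < c)
    (hδ : 0 < δ)
    (hasymp : ∃ C ε : ℝ, 0 < ε ∧ ∀ E, E₀ - ε < E →
      |φ E - c * (max (E₀ - E) 0) ^ k| ≤ C * (max (E₀ - E) 0) ^ (k + δ)) :
    ∃ η, 0 < η ∧ η ≤ E₀ ∧ ∀ E, E₀ - η < E → E < E₀ → c / 2 * (E₀ - E) ^ k ≤ φ E := by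
  obtain ⟨C, ε, hε, hφ⟩ := hasymp
  have hA : 0 < c / (2 * (|C| + 1)) := by positivity
  refine ⟨min (min ε E₀) ((c / (2 * (|C| + 1))) ^ (1 / δ)), ?_, ?_, ?_⟩
  · exact lt_min (lt_min hε hE₀) (Real.rpow_pos_of_pos hA _)
  · exact (min_le_left _ _).trans (min_le_right _ _)
  · intro E hE hE'
    have hx : 0 < E₀ - E := by linarith
    have hxε : E₀ - E < ε :=
      (by linarith : E₀ - E < _).trans_le ((min_le_left _ _).trans (min_le_left _ _))
    have hxA : E₀ - E ≤ (c / (2 * (|C| + 1))) ^ (1 / δ) :=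
      (by linarith : E₀ - E ≤ _).trans (min_le_right _ _)
    have h1 : (E₀ - E) ^ δ ≤ c / (2 * (|C| + 1)) := by
      refine (Real.rpow_le_rpow hx.le hxA hδ.le).trans_eq ?_
      rw [← Real.rpow_mul hA.le, one_div_mul_cancel hδ.ne', Real.rpow_one]
    have h2 := (abs_le.1 (hφ E (by linarith))).1
    rw [max_eq_left hx.le, Real.rpow_add hx] at h2
    have hk0 : 0 < (E₀ - E) ^ k := Real.rpow_pos_of_pos hx k
    have hδ0 : 0 < (E₀ - E) ^ δ := Real.rpow_pos_of_pos hx δ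
    have h3 : C * (E₀ - E) ^ δ ≤ c / 2 := by
      calc C * (E₀ - E) ^ δ ≤ (|C| + 1) * (E₀ - E) ^ δ := by
            gcongr; exact (le_abs_self C).trans (le_add_of_nonneg_right zero_le_one)
        _ ≤ (|C| + 1) * (c / (2 * (|C| + 1))) := by gcongr
        _ = c / 2 := by field_simp
    have h4 := mul_le_mul_of_nonneg_left h3 hk0.le
    linarith

lemma exists_hfun_lower_bound {k E₀ c δ m : ℝ} {φ : ℝ → ℝ} (hk : -1 < k) (hm : 0 ≤ m)
    (hE₀ : 0 < E₀) (hc : 0 < c) (hδ : 0 < δ)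
    (hmeas : Measurable φ) (hnonneg : ∀ E, 0 < E → 0 ≤ φ E)
    (hloc : ∀ K : Set ℝ, IsCompact K → K ⊆ Ioo 0 E₀ → ∃ C : ℝ, ∀ᵐ E : ℝ, E ∈ K → φ E ≤ C)
    (hasymp : ∃ C ε : ℝ, 0 < ε ∧ ∀ E, E₀ - ε < E →
      |φ E - c * (max (E₀ - E) 0) ^ k| ≤ C * (max (E₀ - E) 0) ^ (k + δ)) :
    ∃ K, 0 < K ∧ ∀ u, 0 < u → u < E₀ → K * (E₀ - u) ^ (k + m + 1) ≤ hfun φ E₀ m u := by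
  obtain ⟨η, hη, hηE, hlow⟩ := exists_profile_lower_bound hE₀ hc hδ hasymp
  refine ⟨c / 2 * (1 / 4) ^ |k| * (E₀ / 4) ^ m * (1 / 4) * (η / E₀) ^ (k + m + 1),
    by positivity, fun u hu huE => ?_⟩
  have hx : 0 < E₀ - u := by linarith
  set d := η / E₀ * (E₀ - u) with hd
  have hd0 : 0 < d := by positivity
  have hdx : d ≤ E₀ - u := mul_le_of_le_one_left hx.le ((div_le_one hE₀).2 hηE)
  have hdη : d ≤ η := by
    rw [hd, div_mul_eq_mul_div, div_le_iff₀ hE₀]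
    exact mul_le_mul_of_nonneg_left (by linarith) hη.le
  have hint : IntegrableOn (fun E => φ E * (max (E ^ 2 - u ^ 2) 0) ^ m) (Ioc u E₀) := by
    obtain ⟨C, ε, hε, hφ⟩ := hasymp
    refine (integrableOn_profile hk hδ hmeas hnonneg hloc hε hφ hu).mul_continuousOn_of_subset
      (K := Icc u E₀) ?_ measurableSet_Ioc isCompact_Icc Ioc_subset_Icc_self
    exact ((by fun_prop : Continuous fun E : ℝ => max (E ^ 2 - u ^ 2) 0).rpow_const
      fun _ => Or.inr hm).continuousOn
  have hsub : Ioc (E₀ - d / 2) (E₀ - d / 4) ⊆ Ioc u E₀ := fun E hE =>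
    ⟨by linarith [hE.1], by linarith [hE.2]⟩
  have hbound : ∀ E ∈ Ioc (E₀ - d / 2) (E₀ - d / 4),
      c / 2 * ((1 / 4) ^ |k| * d ^ k) * (d * (E₀ / 4)) ^ m ≤
        φ E * (max (E ^ 2 - u ^ 2) 0) ^ m := by
    rintro E ⟨hE1, hE2⟩
    have h1 := hlow E (by linarith) (by linarith)
    have ht : 1 / 4 ≤ (E₀ - E) / d := by rw [le_div_iff₀ hd0]; linarith
    have ht1 : (E₀ - E) / d ≤ 1 := by rw [div_le_one hd0]; linarith
    have ht0 : 0 < (E₀ - E) / d := by linarith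
    have h2 : (1 / 4) ^ |k| * d ^ k ≤ (E₀ - E) ^ k := by
      have h3 : (E₀ - E) ^ k = ((E₀ - E) / d) ^ k * d ^ k := by
        rw [← Real.mul_rpow ht0.le hd0.le, div_mul_cancel₀ _ hd0.ne']
      rw [h3]
      refine mul_le_mul_of_nonneg_right ?_ (by positivity)
      exact (Real.rpow_le_rpow (by norm_num) ht (abs_nonneg k)).trans
        (Real.rpow_le_rpow_of_exponent_ge ht0 ht1 (le_abs_self k))
    have h4 : d * (E₀ / 4) ≤ max (E ^ 2 - u ^ 2) 0 := by
      refine le_trans ?_ (le_max_left _ _)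
      have h5 : d / 2 ≤ E - u := by linarith
      have h6 : E₀ / 2 ≤ E + u := by linarith
      nlinarith
    have h7 : c / 2 * ((1 / 4) ^ |k| * d ^ k) ≤ φ E :=
      (mul_le_mul_of_nonneg_left h2 (by positivity)).trans h1
    exact mul_le_mul h7 (Real.rpow_le_rpow (by positivity) h4 hm) (by positivity)
      (le_trans (by positivity) h7)
  have hconst := setIntegral_ge_of_const_le_real measurableSet_Ioc (by simp) hbound
    (hint.mono_set hsub)
  have hmono := setIntegral_mono_set hint
    (ae_restrict_of_forall_mem measurableSet_Ioc fun E hE =>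
      mul_nonneg (hnonneg E (hu.trans hE.1)) (Real.rpow_nonneg (le_max_right _ _) _))
    hsub.eventuallyLE
  rw [hfun, intervalIntegral.integral_of_le huE.le]
  refine le_trans (le_of_eq ?_) (hconst.trans hmono)
  rw [Real.volume_real_Ioc_of_le (by linarith), Real.mul_rpow hd0.le (by positivity)]
  have h8 : (η / E₀) ^ (k + m + 1) * (E₀ - u) ^ (k + m + 1) = d ^ k * d ^ m * d := by
    rw [← Real.mul_rpow (by positivity) hx.le, ← hd, Real.rpow_add hd0, Real.rpow_add hd0,
      Real.rpow_one]
  linear_combination c / 2 * (1 / 4) ^ |k| * (E₀ / 4) ^ m * (1 / 4) * h8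

/-- The field equation for `lam` says that the Misner-Sharp mass `r (1 - e^{-2λ}) / 2` has
derivative `4 π r² ρ`. -/
lemma hasDerivAt_misnerSharp {lam : ℝ → ℝ} {r ρ : ℝ} (hlam : DifferentiableAt ℝ lam r)
    (hfield : Real.exp (-2 * lam r) * (2 * r * deriv lam r - 1) + 1 = 8 * Real.pi * r ^ 2 * ρ) :
    HasDerivAt (fun s => s / 2 * (1 - Real.exp (-2 * lam s))) (4 * Real.pi * r ^ 2 * ρ) r := by
  have h := ((hasDerivAt_id r).div_const 2).mul
    (((hlam.hasDerivAt.const_mul (-2)).exp).const_sub 1)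
  refine h.congr_deriv ?_
  simp only [id]
  linear_combination hfield / 2

lemma misnerSharp_nonneg {lam ρ : ℝ → ℝ} (hlam : ContinuousOn lam (Ici 0))
    (hdiff : ∀ r, 0 < r → DifferentiableAt ℝ lam r) (hρ : ∀ r, 0 < r → 0 ≤ ρ r)
    (hfield : ∀ r ∈ Ioi (0 : ℝ), Real.exp (-2 * lam r) * (2 * r * deriv lam r - 1) + 1 =
      8 * Real.pi * r ^ 2 * ρ r) {r : ℝ} (hr : 0 ≤ r) :
    0 ≤ r / 2 * (1 - Real.exp (-2 * lam r)) := by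
  have hmono : MonotoneOn (fun s => s / 2 * (1 - Real.exp (-2 * lam s))) (Ici 0) := by
    refine monotoneOn_of_deriv_nonneg (convex_Ici 0) (by fun_prop) ?_ ?_ <;> intro s hs <;>
      rw [interior_Ici] at hs <;>
      have h := hasDerivAt_misnerSharp (hdiff s hs) (hfield s hs)
    · exact h.differentiableAt.differentiableWithinAt
    · rw [h.deriv]
      have := hρ s hs
      positivity
  simpa using hmono (mem_Ici.2 le_rfl) (mem_Ici.2 hr) hr

/-- The field equation for `mu` with nonnegative pressure and mass gives `μ' ≥ m / r²`. -/
lemma misnerSharp_div_le_deriv {lam mu : ℝ → ℝ} {r p : ℝ} (hr : 0 < r) (hp : 0 ≤ p)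
    (hmass : 0 ≤ r / 2 * (1 - Real.exp (-2 * lam r)))
    (hfield : Real.exp (-2 * lam r) * (2 * r * deriv mu r + 1) - 1 = 8 * Real.pi * r ^ 2 * p) :
    r / 2 * (1 - Real.exp (-2 * lam r)) / r ^ 2 ≤ deriv mu r := by
  set e := Real.exp (-2 * lam r) with he
  have he0 : 0 < e := Real.exp_pos _
  have he1 : 0 ≤ 1 - e := nonneg_of_mul_nonneg_right hmass (by positivity)
  have hP : 0 ≤ 8 * Real.pi * r ^ 2 * p := by positivity
  have h1 : 1 - e ≤ e * (2 * r * deriv mu r) := by linarith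
  have h2 : 0 ≤ 2 * r * deriv mu r := nonneg_of_mul_nonneg_right (he1.trans h1) he0
  have h3 : 1 - e ≤ 2 * r * deriv mu r := h1.trans (mul_le_of_le_one_left h2 (by linarith))
  rw [div_le_iff₀ (by positivity)]
  nlinarith

lemma rhoRedVE_nonneg {φ mu : ℝ → ℝ} {E₀ l r : ℝ} (hl : -1 < l)
    (hnonneg : ∀ E, 0 < E → 0 ≤ φ E) (hvanish : ∀ E, E₀ ≤ E → φ E = 0) (hr : 0 < r) :
    0 ≤ rhoRedVE φ E₀ l mu r := by
  have h1 := cab_pos (b := -(1 / 2)) hl (by norm_num)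
  have h2 := hfun_nonneg (l + 3 / 2) hnonneg hvanish (Real.exp_pos (mu r))
  have h3 := hfun_nonneg (l + 1 / 2) hnonneg hvanish (Real.exp_pos (mu r))
  unfold rhoRedVE
  positivity

lemma pRedVE_nonneg {φ mu : ℝ → ℝ} {E₀ l r : ℝ} (hl : -1 < l)
    (hnonneg : ∀ E, 0 < E → 0 ≤ φ E) (hvanish : ∀ E, E₀ ≤ E → φ E = 0) (hr : 0 < r) :
    0 ≤ pRedVE φ E₀ l mu r := by
  have h1 := cab_pos (b := 1 / 2) hl (by norm_num)
  have h2 := hfun_nonneg (l + 3 / 2) hnonneg hvanish (Real.exp_pos (mu r))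
  unfold pRedVE
  positivity

/-- A power-law lower bound for the energy density in terms of the gravitational potential
`log E₀ - μ`, as long as `μ` stays above a fixed value `a`. -/
lemma exists_rhoRedVE_lower_bound {φ mu : ℝ → ℝ} {k l E₀ c δ : ℝ} (a : ℝ)
    (hk : -1 < k) (hl : -(1 / 2 : ℝ) < l)
    (hE₀ : 0 < E₀) (hc : 0 < c) (hδ : 0 < δ)
    (hmeas : Measurable φ) (hnonneg : ∀ E, 0 < E → 0 ≤ φ E)
    (hvanish : ∀ E, E₀ ≤ E → φ E = 0)
    (hloc : ∀ K : Set ℝ, IsCompact K → K ⊆ Ioo 0 E₀ → ∃ C : ℝ, ∀ᵐ E : ℝ, E ∈ K → φ E ≤ C)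
    (hasymp : ∃ C ε : ℝ, 0 < ε ∧ ∀ E, E₀ - ε < E →
      |φ E - c * (max (E₀ - E) 0) ^ k| ≤ C * (max (E₀ - E) 0) ^ (k + δ)) :
    ∃ K, 0 < K ∧ ∀ r, 0 < r → a ≤ mu r → mu r < Real.log E₀ →
      K * r ^ (2 * l) * (Real.log E₀ - mu r) ^ (k + l + 3 / 2) ≤ rhoRedVE φ E₀ l mu r := by
  obtain ⟨K, hK, hlow⟩ := exists_hfun_lower_bound (m := l + 1 / 2) hk (by linarith) hE₀ hc hδ
    hmeas hnonneg hloc hasymp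
  have hcab := cab_pos (a := l) (b := -(1 / 2)) (by linarith) (by norm_num)
  have hexpo : k + (l + 1 / 2) + 1 = k + l + 3 / 2 := by ring
  rw [hexpo] at hlow
  set n := k + l + 3 / 2 with hn
  refine ⟨2 * Real.pi * cab l (-(1 / 2)) * (Real.exp (-(2 * l + 2) * Real.log E₀) *
    (K * Real.exp a ^ n)), by positivity, fun r hr ha hmu => ?_⟩
  have hy : 0 < Real.log E₀ - mu r := by linarith
  have huE : Real.exp (mu r) < E₀ := by rwa [← Real.lt_log_iff_exp_lt hE₀]
  have h1 : Real.exp a * (Real.log E₀ - mu r) ≤ E₀ - Real.exp (mu r) := by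
    have h2 : E₀ = Real.exp (mu r) * Real.exp (Real.log E₀ - mu r) := by
      rw [← Real.exp_add, add_sub_cancel, Real.exp_log hE₀]
    have h3 := Real.add_one_le_exp (Real.log E₀ - mu r)
    have h4 := Real.exp_le_exp.2 ha
    calc Real.exp a * (Real.log E₀ - mu r)
        ≤ Real.exp (mu r) * (Real.exp (Real.log E₀ - mu r) - 1) :=
          mul_le_mul h4 (by linarith) hy.le (Real.exp_pos _).le
      _ = E₀ - Real.exp (mu r) := by rw [mul_sub, ← h2, mul_one]
  have h5 : K * Real.exp a ^ n * (Real.log E₀ - mu r) ^ n ≤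
      hfun φ E₀ (l + 1 / 2) (Real.exp (mu r)) := by
    refine le_trans ?_ (hlow _ (Real.exp_pos _) huE)
    rw [mul_assoc, ← Real.mul_rpow (Real.exp_pos a).le hy.le]
    exact mul_le_mul_of_nonneg_left
      (Real.rpow_le_rpow (by positivity) h1 (by linarith)) hK.le
  have h6 : Real.exp (-(2 * l + 2) * Real.log E₀) ≤ Real.exp (-(2 * l + 2) * mu r) :=
    Real.exp_le_exp.2 (by nlinarith)
  have h7 := mul_le_mul h6 h5 (by positivity) (Real.exp_pos _).le
  have h8 : 0 ≤ Real.exp (-(2 * l + 4) * mu r) * hfun φ E₀ (l + 3 / 2) (Real.exp (mu r)) :=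
    mul_nonneg (Real.exp_pos _).le (hfun_nonneg _ hnonneg hvanish (Real.exp_pos _))
  have h9 : 0 ≤ 2 * Real.pi * cab l (-(1 / 2)) * r ^ (2 * l) := by positivity
  calc _ = 2 * Real.pi * cab l (-(1 / 2)) * r ^ (2 * l) *
        (Real.exp (-(2 * l + 2) * Real.log E₀) *
          (K * Real.exp a ^ n * (Real.log E₀ - mu r) ^ n)) := by ring
    _ ≤ rhoRedVE φ E₀ l mu r := mul_le_mul_of_nonneg_left (by linarith) h9

/-- Finiteness of the mass for a compactly supported density solving the field equation for
`lam`. -/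
lemma integrableOn_sq_mul_density {lam ρ : ℝ → ℝ} {R : ℝ} (hlam : ContDiffOn ℝ 1 lam (Ici 0))
    (hfield : ∀ r ∈ Ioi (0 : ℝ), Real.exp (-2 * lam r) * (2 * r * deriv lam r - 1) + 1 =
      8 * Real.pi * r ^ 2 * ρ r) (hR : ∀ r, R ≤ r → ρ r = 0) :
    IntegrableOn (fun r => r ^ 2 * ρ r) (Ioi 0) := by
  have hcont : ContinuousOn lam (Icc 0 R) := hlam.continuousOn.mono Icc_subset_Ici_self
  have hcont' : ContinuousOn (derivWithin lam (Ici 0)) (Icc 0 R) :=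
    (hlam.continuousOn_derivWithin (uniqueDiffOn_Ici 0) le_rfl).mono Icc_subset_Ici_self
  have hg : ContinuousOn (fun r => (Real.exp (-2 * lam r) *
      (2 * r * derivWithin lam (Ici 0) r - 1) + 1) / (8 * Real.pi)) (Icc 0 R) := by
    fun_prop
  have hinner : IntegrableOn (fun r => r ^ 2 * ρ r) (Ioc 0 R) := by
    refine (hg.integrableOn_Icc.mono_set Ioc_subset_Icc_self).congr_fun (fun r hr => ?_)
      measurableSet_Ioc
    have h := hfield r hr.1
    have hd : derivWithin lam (Ici 0) r = deriv lam r :=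
      derivWithin_of_mem_nhds (Ici_mem_nhds hr.1)
    simp only [hd, h]
    field_simp
  have houter : IntegrableOn (fun r => r ^ 2 * ρ r) (Ioi R) := by
    refine integrableOn_zero.congr_fun (fun r hr => ?_) measurableSet_Ioi
    simp [hR r (le_of_lt hr)]
  refine (hinner.union houter).mono_set fun r hr => ?_
  rcases le_or_gt r R with h | h
  · exact Or.inl ⟨hr, h⟩
  · exact Or.inr h

theorem main_relativistic
    (k l E₀ c δ : ℝ) (hk : -1 < k) (hl : -(1/2 : ℝ) < l)
    (hkl : 0 < k + l + 1 / 2) (hkl' : k < l + 3 / 2)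
    (hE₀ : 0 < E₀) (hc : 0 < c) (hδ : 0 < δ)
    (φ : ℝ → ℝ) (hmeas : Measurable φ) (hnonneg : ∀ E, 0 < E → 0 ≤ φ E)
    (hvanish : ∀ E, E₀ ≤ E → φ E = 0)
    (hloc : ∀ K : Set ℝ, IsCompact K → K ⊆ Ioo 0 E₀ →
      ∃ C : ℝ, ∀ᵐ E : ℝ, E ∈ K → φ E ≤ C)
    (hasymp : ∃ C ε : ℝ, 0 < ε ∧ ∀ E, E₀ - ε < E →
      |φ E - c * (max (E₀ - E) 0) ^ k| ≤ C * (max (E₀ - E) 0) ^ (k + δ))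
    (lam mu : ℝ → ℝ)
    (hlamC1 : ContDiffOn ℝ 1 lam (Ici 0)) (hmuC1 : ContDiffOn ℝ 1 mu (Ici 0))
    (hlam0 : lam 0 = 0)
    (hfield1 : ∀ r ∈ Ioi (0 : ℝ),
      Real.exp (-2 * lam r) * (2 * r * deriv lam r - 1) + 1 =
        8 * Real.pi * r ^ 2 * rhoRedVE φ E₀ l mu r)
    (hfield2 : ∀ r ∈ Ioi (0 : ℝ),
      Real.exp (-2 * lam r) * (2 * r * deriv mu r + 1) - 1 =
        8 * Real.pi * r ^ 2 * pRedVE φ E₀ l mu r) :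
    (∃ R : ℝ, ∀ r, R ≤ r → rhoRedVE φ E₀ l mu r = 0) ∧
      IntegrableOn (fun r => r ^ 2 * rhoRedVE φ E₀ l mu r) (Ioi 0) := by
  have hl1 : -1 < l := by linarith
  have hρ : ∀ r, 0 < r → 0 ≤ rhoRedVE φ E₀ l mu r := fun r =>
    rhoRedVE_nonneg hl1 hnonneg hvanish
  have hlamd : ∀ r, 0 < r → DifferentiableAt ℝ lam r := fun r hr =>
    (hlamC1.differentiableOn one_ne_zero).differentiableAt (Ici_mem_nhds hr)
  have hmud : ∀ r, 0 < r → DifferentiableAt ℝ mu r := fun r hr =>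
    (hmuC1.differentiableOn one_ne_zero).differentiableAt (Ici_mem_nhds hr)
  have hmass : ∀ r, 0 < r → 0 ≤ r / 2 * (1 - Real.exp (-2 * lam r)) := fun r hr =>
    misnerSharp_nonneg hlamC1.continuousOn hlamd hρ hfield1 hr.le
  have hmu' : ∀ r, 0 < r → r / 2 * (1 - Real.exp (-2 * lam r)) / r ^ 2 ≤ deriv mu r := fun r hr =>
    misnerSharp_div_le_deriv hr (pRedVE_nonneg hl1 hnonneg hvanish hr) (hmass r hr) (hfield2 r hr)
  have hmono : ∀ r s, 1 ≤ r → r ≤ s → mu r ≤ mu s := by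
    intro r s hr hrs
    have hanti : AntitoneOn (fun t => -mu t) (Ici 1) :=
      antitoneOn_Ici_of_hasDerivAt
        (fun t ht => (hmud t (zero_lt_one.trans_le ht)).hasDerivAt.neg)
        (fun t ht => neg_nonpos.2 ((div_nonneg (hmass t (zero_lt_one.trans_le ht))
          (sq_nonneg t)).trans (hmu' t (zero_lt_one.trans_le ht))))
    exact neg_le_neg_iff.1 (hanti (mem_Ici.2 hr) (mem_Ici.2 (hr.trans hrs)) hrs)
  obtain ⟨R, hR1, hR⟩ : ∃ R, 1 ≤ R ∧ Real.log E₀ ≤ mu R := by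
    by_contra! hcon
    obtain ⟨K, hK, hlow⟩ := exists_rhoRedVE_lower_bound (mu := mu) (mu 1) hk hl hE₀ hc hδ
      hmeas hnonneg hvanish hloc hasymp
    refine false_of_potential_pos (K := 4 * Real.pi * K) (n := k + l + 3 / 2) (b := 2 + 2 * l)
      (y := fun r => Real.log E₀ - mu r)
      (by positivity) (by linarith) (by linarith)
      (fun r hr => hasDerivAt_misnerSharp (hlamd r (zero_lt_one.trans_le hr))
        (hfield1 r (zero_lt_one.trans_le hr)))
      (fun r hr => (hmud r (zero_lt_one.trans_le hr)).hasDerivAt.const_sub _)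
      (fun r hr => hmass r (zero_lt_one.trans_le hr))
      (fun r hr => sub_pos.2 (hcon r hr)) ?_
      (fun r hr => neg_le_neg (hmu' r (zero_lt_one.trans_le hr)))
    intro r hr
    have hr0 : 0 < r := zero_lt_one.trans_le hr
    have h := mul_le_mul_of_nonneg_left (hlow r hr0 (hmono 1 r le_rfl hr) (hcon r hr))
      (by positivity : 0 ≤ 4 * Real.pi * r ^ 2)
    refine le_trans (le_of_eq ?_) h
    rw [Real.rpow_add hr0, Real.rpow_two]
    ring
  have hzero : ∀ r, R ≤ r → rhoRedVE φ E₀ l mu r = 0 := by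
    intro r hr
    have hE : E₀ ≤ Real.exp (mu r) :=
      (Real.log_le_iff_le_exp hE₀).1 (hR.trans (hmono R r hR1 hr))
    simp [rhoRedVE, hfun_eq_zero _ hvanish hE]
  exact ⟨⟨R, hzero⟩, integrableOn_sq_mul_density hlamC1 hfield1 hzero⟩
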